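/- arXiv:2311.00185 — 2 statements merged into one kernel-verified Lean document; each statement's English description precedes it below -/
import Mathlib

section
/- Let n ≥ 1, let P ⊆ [0,1]^n be a convex set, let j ∈ {1,…,n}, a ∈ {0,1}, and k ≥ 1. Then L^k(P) ∩ {x : x_j = a} = L^k(P ∩ {x : x_j = a}). -/
open Set

def cube (n : ℕ) : Set (Fin n → ℝ) := {x | ∀ i, 0 ≤ x i ∧ x i ≤ 1}

def Lop (n : ℕ) (P : Set (Fin n → ℝ)) : Set (Fin n → ℝ) :=
  ⋂ i : Fin n, convexHull ℝ ((P ∩ {x | x i = 0}) ∪ (P ∩ {x | x i = 1}))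

def Lk (n : ℕ) : ℕ → Set (Fin n → ℝ) → Set (Fin n → ℝ)
  | 0, P => P
  | k + 1, P => Lop n (Lk n k P)

theorem face_hull {n : ℕ} (f : (Fin n → ℝ) →ₗ[ℝ] ℝ) (c : ℝ) (S : Set (Fin n → ℝ))
    (hS : ∀ x ∈ S, f x ≤ c) :
    convexHull ℝ S ∩ {x | f x = c} = convexHull ℝ (S ∩ {x | f x = c}) := by
  apply Set.Subset.antisymm
  · have key : convexHull ℝ S ⊆
        {x | f x ≤ c ∧ (f x = c → x ∈ convexHull ℝ (S ∩ {x | f x = c}))} := by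
      apply convexHull_min
      · intro x hx
        exact ⟨hS x hx, fun h => subset_convexHull ℝ _ ⟨hx, h⟩⟩
      · rintro x ⟨hx, hx'⟩ y ⟨hy, hy'⟩ u v hu hv huv
        have e : f (u • x + v • y) = u * f x + v * f y := by simp
        have hc : c = u * c + v * c := by rw [← add_mul, huv, one_mul]
        have h1 := mul_le_mul_of_nonneg_left hx hu
        have h2 := mul_le_mul_of_nonneg_left hy hv
        refine ⟨by rw [e]; linarith, fun h => ?_⟩
        rw [e] at h
        rcases hu.eq_or_lt with hu0 | hu0
        · have hv1 : v = 1 := by linarith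
          subst hu0 hv1
          simpa using hy' (by simpa using h)
        rcases hv.eq_or_lt with hv0 | hv0
        · have hu1 : u = 1 := by linarith
          subst hv0 hu1
          simpa using hx' (by simpa using h)
        have h3 : f x = c := mul_left_cancel₀ hu0.ne' (by linarith)
        have h4 : f y = c := mul_left_cancel₀ hv0.ne' (by linarith)
        exact convex_convexHull ℝ _ (hx' h3) (hy' h4) hu hv huv
    rintro x ⟨hx, hxc⟩
    exact (key hx).2 hxc
  · apply convexHull_min
    · rintro x ⟨hx, hxc⟩
      exact ⟨subset_convexHull ℝ _ hx, hxc⟩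
    · exact (convex_convexHull ℝ _).inter (convex_hyperplane f.isLinear c)

theorem face_hull_cube {n : ℕ} (S : Set (Fin n → ℝ)) (hS : S ⊆ cube n) (j : Fin n)
    (a : ℝ) (ha : a = 0 ∨ a = 1) :
    convexHull ℝ S ∩ {x | x j = a} = convexHull ℝ (S ∩ {x | x j = a}) := by
  rcases ha with rfl | rfl
  · have := face_hull (-(LinearMap.proj j : (Fin n → ℝ) →ₗ[ℝ] ℝ)) 0 S
      (fun x hx => by simpa using (hS hx j).1)
    simpa using this
  · have := face_hull (LinearMap.proj j : (Fin n → ℝ) →ₗ[ℝ] ℝ) 1 S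
      (fun x hx => by simpa using (hS hx j).2)
    simpa using this

theorem convex_cube (n : ℕ) : Convex ℝ (cube n) := by
  have : cube n = Set.Icc 0 1 := by
    ext x
    simp [cube, Pi.le_def, forall_and]
  rw [this]
  exact convex_Icc 0 1

theorem Lop_face {n : ℕ} (P : Set (Fin n → ℝ)) (hP : P ⊆ cube n) (j : Fin n)
    (a : ℝ) (ha : a = 0 ∨ a = 1) :
    Lop n P ∩ {x | x j = a} = Lop n (P ∩ {x | x j = a}) := by
  have : Nonempty (Fin n) := ⟨j⟩
  unfold Lop
  rw [Set.iInter_inter]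
  refine Set.iInter_congr fun i => ?_
  rw [face_hull_cube _ _ j a ha]
  · congr 1
    ext x
    simp only [Set.mem_inter_iff, Set.mem_union]
    tauto
  · rintro x (hx | hx)
    · exact hP hx.1
    · exact hP hx.1

theorem Lk_cube {n : ℕ} (i : Fin n) (P : Set (Fin n → ℝ)) (hP : P ⊆ cube n) (k : ℕ) :
    Lk n k P ⊆ cube n := by
  induction k with
  | zero => exact hP
  | succ k ih =>
    refine (Set.iInter_subset _ i).trans (convexHull_min ?_ (convex_cube n))
    rintro x (hx | hx)
    · exact ih hx.1
    · exact ih hx.1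

theorem stmt1 (n : ℕ) (hn : 1 ≤ n) (P : Set (Fin n → ℝ)) (hPcube : P ⊆ cube n)
    (hPconv : Convex ℝ P) (j : Fin n) (a : ℝ) (ha : a = 0 ∨ a = 1) (k : ℕ) (hk : 1 ≤ k) :
    Lk n k P ∩ {x | x j = a} = Lk n k (P ∩ {x | x j = a}) := by
  clear hk
  induction k with
  | zero => rfl
  | succ k ih =>
    change Lop n (Lk n k P) ∩ _ = Lop n (Lk n k _)
    rw [← ih, Lop_face _ (Lk_cube j P hPcube k) j a ha]
end

section
/- Let G be a simple graph on vertex set {1,…,n} (n ≥ 1) with clique number k, and let P_G be its fractional clique polytope. Then for every permutation π of {1,…,n}, 𝒯^{π,k}(P_G) = conv(P_G ∩ {0,1}^n). -/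
open Set

def corners (n : ℕ) : Set (Fin n → ℝ) := {x | ∀ i, x i = 0 ∨ x i = 1}

/-- The fractional clique polytope of a graph `G` on vertex set `Fin n`. -/
def fracClique (n : ℕ) (G : SimpleGraph (Fin n)) : Set (Fin n → ℝ) :=
  {x | (∀ v, 0 ≤ x v) ∧ ∀ u v : Fin n, u ≠ v → ¬ G.Adj u v → x u + x v ≤ 1}

/-- Branching trees over the index set `Fin n`. -/
inductive BTree (n : ℕ) : Type
  | leaf : BTree n
  | node : Fin n → BTree n → BTree n → BTree n

/-- The list of leaves of a tree, each recorded as the pair `(J⁰, J¹)` of sets of indices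
fixed to `0` resp. `1` on the path from the root to the leaf. -/
def leavesJ {n : ℕ} : BTree n → Finset (Fin n) → Finset (Fin n) →
    List (Finset (Fin n) × Finset (Fin n))
  | .leaf, J0, J1 => [(J0, J1)]
  | .node j t0 t1, J0, J1 => leavesJ t0 (insert j J0) J1 ++ leavesJ t1 J0 (insert j J1)

/-- The skewed `k`-tree construction. -/
def skew {n : ℕ} (k : ℕ) : List (Fin n) → ℕ → BTree n
  | [], _ => .leaf
  | j :: l, c => if c < k then .node j (skew k l c) (skew k l (c + 1)) else .leaf

/-- The skewed `k`-tree `𝒯^{π,k}` for a permutation `π` of the indices. -/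
def skewTree (n k : ℕ) (π : Equiv.Perm (Fin n)) : BTree n :=
  skew k ((List.finRange n).map π) 0

/-- The atom of a leaf `p = (J⁰, J¹)`. -/
def atom (n : ℕ) (P : Set (Fin n → ℝ)) (p : Finset (Fin n) × Finset (Fin n)) :
    Set (Fin n → ℝ) :=
  P ∩ {x | (∀ j ∈ p.1, x j = 0) ∧ ∀ j ∈ p.2, x j = 1}

/-- `𝒯(P)`: the convex hull of the union of the atoms of the leaves of `𝒯`. -/
def treeSet (n : ℕ) (T : BTree n) (P : Set (Fin n → ℝ)) : Set (Fin n → ℝ) :=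
  convexHull ℝ (⋃ p ∈ leavesJ T ∅ ∅, atom n P p)

theorem leaf_mono {n : ℕ} (T : BTree n) : ∀ (J0 J1 : Finset (Fin n)),
    ∀ p ∈ leavesJ T J0 J1, J0 ⊆ p.1 ∧ J1 ⊆ p.2 := by
  induction T with
  | leaf =>
    intro J0 J1 p hp
    simp only [leavesJ, List.mem_singleton] at hp
    subst hp
    exact ⟨subset_rfl, subset_rfl⟩
  | node j t0 t1 ih0 ih1 =>
    intro J0 J1 p hp
    simp only [leavesJ, List.mem_append] at hp
    rcases hp with hp | hp
    · have := ih0 _ _ p hp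
      exact ⟨(Finset.subset_insert _ _).trans this.1, this.2⟩
    · have := ih1 _ _ p hp
      exact ⟨this.1, (Finset.subset_insert _ _).trans this.2⟩

theorem leaf_shape {n : ℕ} (k : ℕ) (l : List (Fin n)) : ∀ (c : ℕ) (J0 J1 : Finset (Fin n)),
    l.Nodup → (∀ j ∈ l, j ∉ J1) → J1.card = c →
    ∀ p ∈ leavesJ (skew k l c) J0 J1, k ≤ p.2.card ∨ ∀ j ∈ l, j ∈ p.1 ∨ j ∈ p.2 := by
  induction l with
  | nil => intro c J0 J1 _ _ _ p _; right; simp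
  | cons a l ih =>
    intro c J0 J1 hnd hdis hc p hp
    rw [List.nodup_cons] at hnd
    by_cases hck : c < k
    · simp only [skew, if_pos hck, leavesJ, List.mem_append] at hp
      rcases hp with hp | hp
      · have hm := leaf_mono _ _ _ p hp
        rcases ih c _ _ hnd.2 (fun j hj => hdis j (List.mem_cons_of_mem _ hj)) hc p hp with h | h
        · exact Or.inl h
        · right
          intro j hj
          rcases List.mem_cons.1 hj with rfl | hj
          · exact Or.inl (hm.1 (Finset.mem_insert_self _ _))
          · exact h j hj
      · have hm := leaf_mono _ _ _ p hp
        have haJ : a ∉ J1 := hdis a List.mem_cons_self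
        have hd : ∀ j ∈ l, j ∉ insert a J1 := by
          intro j hj hmem
          rcases Finset.mem_insert.1 hmem with rfl | h
          · exact hnd.1 hj
          · exact hdis j (List.mem_cons_of_mem _ hj) h
        rcases ih (c + 1) _ _ hnd.2 hd (by rw [Finset.card_insert_of_notMem haJ, hc]) p hp with h | h
        · exact Or.inl h
        · right
          intro j hj
          rcases List.mem_cons.1 hj with rfl | hj
          · exact Or.inr (hm.2 (Finset.mem_insert_self _ _))
          · exact h j hj
    · simp only [skew, if_neg hck, leavesJ, List.mem_singleton] at hp
      subst hp
      left
      show k ≤ J1.card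
      omega

theorem exists_leaf {n : ℕ} (x : Fin n → ℝ) (hx : x ∈ corners n) (T : BTree n) :
    ∀ (J0 J1 : Finset (Fin n)), (∀ j ∈ J0, x j = 0) → (∀ j ∈ J1, x j = 1) →
    ∃ p ∈ leavesJ T J0 J1, (∀ j ∈ p.1, x j = 0) ∧ ∀ j ∈ p.2, x j = 1 := by
  induction T with
  | leaf => intro J0 J1 h0 h1; exact ⟨(J0, J1), by simp [leavesJ], h0, h1⟩
  | node j t0 t1 ih0 ih1 =>
    intro J0 J1 h0 h1
    rcases hx j with h | h
    · obtain ⟨p, hp, hh⟩ := ih0 (insert j J0) J1 (by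
        intro i hi
        rcases Finset.mem_insert.1 hi with rfl | hi
        · exact h
        · exact h0 i hi) h1
      exact ⟨p, by simp [leavesJ, hp], hh⟩
    · obtain ⟨p, hp, hh⟩ := ih1 J0 (insert j J1) h0 (by
        intro i hi
        rcases Finset.mem_insert.1 hi with rfl | hi
        · exact h
        · exact h1 i hi)
      exact ⟨p, by simp [leavesJ, hp], hh⟩

theorem stmt9 (n k : ℕ) (hn : 1 ≤ n) (G : SimpleGraph (Fin n))
    -- `k` is the clique number of `G`
    (hk_ex : ∃ K : Finset (Fin n), G.IsNClique k K)
    (hk_max : ∀ K : Finset (Fin n), G.IsClique (K : Set (Fin n)) → K.card ≤ k)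
    (π : Equiv.Perm (Fin n)) :
    treeSet n (skewTree n k π) (fracClique n G) =
      convexHull ℝ (fracClique n G ∩ corners n) := by
  unfold treeSet
  congr 1
  apply Set.Subset.antisymm
  · intro x hx
    simp only [Set.mem_iUnion] at hx
    obtain ⟨p, hp, hxP, h0, h1⟩ := hx
    refine ⟨hxP, ?_⟩
    have hnd : ((List.finRange n).map π).Nodup := (List.nodup_finRange n).map π.injective
    have hclq : G.IsClique (p.2 : Set (Fin n)) := by
      intro u hu v hv huv
      by_contra hadj
      have := hxP.2 u v huv hadj
      rw [h1 u hu, h1 v hv] at this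
      norm_num at this
    intro i
    rcases leaf_shape k _ 0 ∅ ∅ hnd (by simp) (by simp) p hp with h | h
    · by_cases hi : i ∈ p.2
      · exact Or.inr (h1 i hi)
      · left
        by_contra hne
        have hpos : 0 < x i := lt_of_le_of_ne (hxP.1 i) (Ne.symm hne)
        have hc2 : G.IsClique ((insert i p.2 : Finset (Fin n)) : Set (Fin n)) := by
          rw [Finset.coe_insert]
          apply hclq.insert
          intro b hb hib
          by_contra hadj
          have := hxP.2 i b hib hadj
          rw [h1 b hb] at this
          linarith
        have := hk_max _ hc2
        rw [Finset.card_insert_of_notMem hi] at this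
        omega
    · rcases h i (List.mem_map.2 ⟨π.symm i, List.mem_finRange _, by simp⟩) with h | h
      · exact Or.inl (h0 i h)
      · exact Or.inr (h1 i h)
  · rintro x ⟨hxP, hx⟩
    obtain ⟨p, hp, hh⟩ := exists_leaf x hx (skewTree n k π) ∅ ∅ (by simp) (by simp)
    simp only [Set.mem_iUnion]
    exact ⟨p, hp, hxP, hh⟩
end
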